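/- arXiv:1412.3025 — 2 statements merged into one kernel-verified Lean document; each statement's English description precedes it below -/
import Mathlib

section
/- Let M be a monoid, E ⊆ M∖{1} a generating set, and η a factorization map on (M,E). Then η is a factorability structure on (M,E) if and only if η is a weak factorability structure and satisfies the recognition principle. -/
/-- The word length of `m` with respect to the generating set `E`:
the least `n` such that `m` is a product of `n` elements of `E`. -/
noncomputable def wordLength {M : Type*} [Monoid M] (E : Set M) (m : M) : ℕ :=
  sInf {n | ∃ l : List M, (∀ x ∈ l, x ∈ E) ∧ l.length = n ∧ l.prod = m}

/-- `E` is a generating set of the monoid `M`. -/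
def IsGenSet {M : Type*} [Monoid M] (E : Set M) : Prop :=
  ∀ m : M, ∃ l : List M, (∀ x ∈ l, x ∈ E) ∧ l.prod = m

/-- The pair `(a, b)` is geodesic with respect to `E`. -/
noncomputable def Geodesic {M : Type*} [Monoid M] (E : Set M) (a b : M) : Prop :=
  wordLength E (a * b) = wordLength E a + wordLength E b

/-- A factorization map `η = (η̄, η′)` on `(M, E)`. -/
noncomputable def IsFactorizationMap {M : Type*} [Monoid M] (E : Set M)
    (η : M → M × M) : Prop :=
  (∀ m, (η m).1 * (η m).2 = m) ∧
  (∀ m, wordLength E m = wordLength E (η m).1 + wordLength E (η m).2) ∧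
  (∀ m, m ≠ 1 → (η m).2 ∈ E) ∧
  η 1 = (1, 1)

/-- The map `f₁ : M³ → M³` applying `η` to the product of the two right entries,
with triples written `(x₃, x₂, x₁)`. -/
def f1 {M : Type*} [Monoid M] (η : M → M × M) (p : M × M × M) : M × M × M :=
  (p.1, η (p.2.1 * p.2.2))

/-- The map `f₂ : M³ → M³` applying `η` to the product of the two left entries. -/
def f2 {M : Type*} [Monoid M] (η : M → M × M) (p : M × M × M) : M × M × M :=
  ((η (p.1 * p.2.1)).1, (η (p.1 * p.2.1)).2, p.2.2)

/-- The sum of the word lengths of the entries of a triple. -/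
noncomputable def tnorm {M : Type*} [Monoid M] (E : Set M) (p : M × M × M) : ℕ :=
  wordLength E p.1 + wordLength E p.2.1 + wordLength E p.2.2

/-- `η` is a factorability structure on `(M, E)`: it is a factorization map and the
three maps `f₁f₂f₁f₂`, `f₂f₁f₂`, `f₂f₁f₂f₁ : M³ → M³` are equal in the graded sense. -/
noncomputable def IsFactorable {M : Type*} [Monoid M] (E : Set M) (η : M → M × M) : Prop :=
  IsFactorizationMap E η ∧
  ∀ p : M × M × M,
    (f1 η (f2 η (f1 η (f2 η p))) = f2 η (f1 η (f2 η p)) ∧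
     f2 η (f1 η (f2 η p)) = f2 η (f1 η (f2 η (f1 η p)))) ∨
    (tnorm E (f1 η (f2 η (f1 η (f2 η p)))) < tnorm E p ∧
     tnorm E (f2 η (f1 η (f2 η p))) < tnorm E p ∧
     tnorm E (f2 η (f1 η (f2 η (f1 η p)))) < tnorm E p)

/-- `η` is a weak factorability structure on `(M, E)`. -/
noncomputable def IsWeaklyFactorable {M : Type*} [Monoid M] (E : Set M)
    (η : M → M × M) : Prop :=
  IsFactorizationMap E η ∧
  ∀ x : M, ∀ t ∈ E,
    Geodesic E (η x).2 t →
    Geodesic E (η x).1 (η ((η x).2 * t)).1 →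
    Geodesic E x t ∧
    (η (x * t)).2 = (η ((η x).2 * t)).2 ∧
    (η (x * t)).1 = (η x).1 * (η ((η x).2 * t)).1

/-- `η` satisfies the recognition principle. -/
def RecognitionPrinciple {M : Type*} [Monoid M] (E : Set M) (η : M → M × M) : Prop :=
  ∀ m : M, ∀ a ∈ E, (η (m * a) = (m, a) ↔ η ((η m).2 * a) = ((η m).2, a))

section Factorability

variable {M : Type*} [Monoid M] {E : Set M} {η : M → M × M}

theorem exists_list_wordLength (hgen : IsGenSet E) (m : M) :
    ∃ l : List M, (∀ x ∈ l, x ∈ E) ∧ l.length = wordLength E m ∧ l.prod = m := by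
  obtain ⟨l, hl, hm⟩ := hgen m
  exact Nat.sInf_mem (s := {n | ∃ l : List M, (∀ x ∈ l, x ∈ E) ∧ l.length = n ∧ l.prod = m})
    ⟨_, l, hl, rfl, hm⟩

theorem wordLength_prod_le {l : List M} (hl : ∀ x ∈ l, x ∈ E) :
    wordLength E l.prod ≤ l.length :=
  Nat.sInf_le ⟨l, hl, rfl, rfl⟩

theorem wordLength_mul_le (hgen : IsGenSet E) (a b : M) :
    wordLength E (a * b) ≤ wordLength E a + wordLength E b := by
  obtain ⟨k, hk, hkl, rfl⟩ := exists_list_wordLength hgen a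
  obtain ⟨l, hl, hll, rfl⟩ := exists_list_wordLength hgen b
  rw [← hkl, ← hll, ← List.prod_append, ← List.length_append]
  exact wordLength_prod_le fun x hx => (List.mem_append.1 hx).elim (hk x) (hl x)

theorem wordLength_one : wordLength E (1 : M) = 0 :=
  Nat.le_zero.1 (wordLength_prod_le (l := []) (by simp))

theorem eq_one_of_wordLength_eq_zero (hgen : IsGenSet E) {m : M} (h : wordLength E m = 0) :
    m = 1 := by
  obtain ⟨l, -, hl, rfl⟩ := exists_list_wordLength hgen m
  rw [h, List.length_eq_zero_iff] at hl
  simp [hl]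

theorem wordLength_of_mem (h1 : (1 : M) ∉ E) (hgen : IsGenSet E) {e : M} (he : e ∈ E) :
    wordLength E e = 1 := by
  have hle : wordLength E e ≤ 1 := by
    simpa using wordLength_prod_le (E := E) (l := [e]) (by simpa using he)
  have hne : wordLength E e ≠ 0 := fun h => h1 (eq_one_of_wordLength_eq_zero hgen h ▸ he)
  omega

namespace IsFactorizationMap

theorem apply_of_mem (hη : IsFactorizationMap E η) (h1 : (1 : M) ∉ E) (hgen : IsGenSet E)
    {e : M} (he : e ∈ E) : η e = (1, e) := by
  have hmem := hη.2.2.1 e (fun h => h1 (h ▸ he))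
  have hN := hη.2.1 e
  rw [wordLength_of_mem h1 hgen he, wordLength_of_mem h1 hgen hmem] at hN
  have hfst : (η e).1 = 1 := eq_one_of_wordLength_eq_zero hgen (by omega)
  have hmul := hη.1 e
  rw [hfst, one_mul] at hmul
  exact Prod.ext hfst hmul

/-- The map `f₁` does not increase the norm. -/
theorem tnorm_f1_le (hη : IsFactorizationMap E η) (hgen : IsGenSet E) (p : M × M × M) :
    tnorm E (f1 η p) ≤ tnorm E p := by
  have := hη.2.1 (p.2.1 * p.2.2)
  have := wordLength_mul_le hgen p.2.1 p.2.2
  simp only [tnorm, f1]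
  omega

/-- The map `f₂` does not increase the norm. -/
theorem tnorm_f2_le (hη : IsFactorizationMap E η) (hgen : IsGenSet E) (p : M × M × M) :
    tnorm E (f2 η p) ≤ tnorm E p := by
  have := hη.2.1 (p.1 * p.2.1)
  have := wordLength_mul_le hgen p.1 p.2.1
  simp only [tnorm, f2]
  omega

theorem mul_f1 (hη : IsFactorizationMap E η) (p : M × M × M) :
    (f1 η p).1 * (f1 η p).2.1 * (f1 η p).2.2 = p.1 * p.2.1 * p.2.2 := by
  simp [f1, mul_assoc, hη.1]

theorem mul_f2 (hη : IsFactorizationMap E η) (p : M × M × M) :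
    (f2 η p).1 * (f2 η p).2.1 * (f2 η p).2.2 = p.1 * p.2.1 * p.2.2 := by
  simp [f2, hη.1]

end IsFactorizationMap

theorem wordLength_le_tnorm (hgen : IsGenSet E) (p : M × M × M) :
    wordLength E (p.1 * p.2.1 * p.2.2) ≤ tnorm E p := by
  have := wordLength_mul_le hgen (p.1 * p.2.1) p.2.2
  have := wordLength_mul_le hgen p.1 p.2.1
  simp only [tnorm]
  omega

theorem IsFactorable.eq_of_tnorm_le (h : IsFactorable E η) {p : M × M × M}
    (hp : tnorm E p ≤ tnorm E (f2 η (f1 η (f2 η p)))) :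
    f1 η (f2 η (f1 η (f2 η p))) = f2 η (f1 η (f2 η p)) ∧
      f2 η (f1 η (f2 η p)) = f2 η (f1 η (f2 η (f1 η p))) :=
  (h.2 p).resolve_right fun hlt => absurd hlt.2.1 (not_lt.2 hp)

/-- If `(u, b)` is `η`-stable, then so is `(η′(u), b)`. -/
theorem IsFactorable.stable_snd_of_stable (h : IsFactorable E η) (h1 : (1 : M) ∉ E)
    (hgen : IsGenSet E) {u b : M} (hb : b ∈ E) (hub : η (u * b) = (u, b)) :
    η ((η u).2 * b) = ((η u).2, b) := by
  have hηb := h.1.apply_of_mem h1 hgen hb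
  have hf : f2 η (f1 η (f2 η (u, b, 1))) = ((η u).1, (η u).2, b) := by
    simp [f1, f2, hub, hηb]
  have hN := h.1.2.1 u
  have hfix := (h.eq_of_tnorm_le (p := (u, b, 1)) (by
    rw [hf]
    simp only [tnorm, wordLength_one]
    omega)).1
  rw [hf] at hfix
  exact (Prod.ext_iff.1 hfix).2

/-- If `(η′(m), a)` is `η`-stable, then so is `(m, a)`. -/
theorem IsFactorable.stable_of_stable_snd (h : IsFactorable E η) (h1 : (1 : M) ∉ E)
    (hgen : IsGenSet E) {m a : M} (ha : a ∈ E) (hma : η ((η m).2 * a) = ((η m).2, a)) :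
    η (m * a) = (m, a) := by
  have hf : f2 η (f1 η (f2 η (1, m, a))) = ((η m).1, (η m).2, a) := by
    simp [f1, f2, hma, h.1.1]
  have hN := h.1.2.1 m
  have heq := (h.eq_of_tnorm_le (p := (1, m, a)) (by
    rw [hf]
    simp only [tnorm, wordLength_one]
    omega)).2
  rw [hf] at heq
  have hne : m * a ≠ 1 := by
    intro h0
    have hone : f2 η (f1 η (f2 η (f1 η (1, m, a)))) = (1, 1, 1) := by
      simp [f1, f2, h0, h.1.2.2.2]
    rw [hone] at heq
    simp only [Prod.mk.injEq] at heq
    exact h1 (heq.2.2 ▸ ha)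
  have hst := h.stable_snd_of_stable h1 hgen (u := (η (m * a)).1) (b := (η (m * a)).2)
    (h.1.2.2.1 _ hne) (by rw [h.1.1])
  have hf' : f2 η (f1 η (f2 η (f1 η (1, m, a)))) =
      ((η (η (m * a)).1).1, (η (η (m * a)).1).2, (η (m * a)).2) := by
    simp [f1, f2, hst, h.1.1]
  rw [hf'] at heq
  simp only [Prod.mk.injEq] at heq
  refine Prod.ext ?_ heq.2.2.symm
  rw [← h.1.1 (η (m * a)).1, ← heq.1, ← heq.2.1, h.1.1]

theorem IsFactorable.recognitionPrinciple (h : IsFactorable E η) (h1 : (1 : M) ∉ E)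
    (hgen : IsGenSet E) : RecognitionPrinciple E η := fun _ _ ha =>
  ⟨h.stable_snd_of_stable h1 hgen ha, h.stable_of_stable_snd h1 hgen ha⟩

theorem IsFactorable.isWeaklyFactorable (h : IsFactorable E η) (h1 : (1 : M) ∉ E)
    (hgen : IsGenSet E) : IsWeaklyFactorable E η := by
  refine ⟨h.1, fun x t ht hg₁ hg₂ => ?_⟩
  set s := (η ((η x).2 * t)).2 with hs
  set y := (η x).1 * (η ((η x).2 * t)).1 with hy
  have hxt : y * s = x * t := by
    rw [hy, hs, mul_assoc, h.1.1, ← mul_assoc, h.1.1]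
  have hf : f2 η (f1 η (f2 η ((η x).1, (η x).2, t))) = ((η y).1, (η y).2, s) := by
    simp [f1, f2, h.1.1, hy, hs]
  have hNx := h.1.2.1 x
  have hNy := h.1.2.1 y
  have hNs := h.1.2.1 ((η x).2 * t)
  rw [← hs] at hNs
  unfold Geodesic at hg₁ hg₂
  rw [← hy] at hg₂
  have hfix := (h.eq_of_tnorm_le (p := ((η x).1, (η x).2, t)) (by
    rw [hf]
    simp only [tnorm]
    omega)).1
  rw [hf] at hfix
  have hsE : s ∈ E := h.1.2.2.1 _ fun h0 => by
    rw [h0, wordLength_one, wordLength_of_mem h1 hgen ht] at hg₁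
    omega
  have hst := h.stable_of_stable_snd h1 hgen hsE (Prod.ext_iff.1 hfix).2
  have hN := h.1.2.1 (y * s)
  rw [hst] at hN
  rw [hxt] at hst hN
  refine ⟨?_, by rw [hst], by rw [hst]⟩
  simp only [Geodesic] at hN ⊢
  omega

/-- In a weak factorability structure the defining property holds for arbitrary right factors. -/
theorem IsWeaklyFactorable.apply_mul (h : IsWeaklyFactorable E η) (h1 : (1 : M) ∉ E)
    (hgen : IsGenSet E) (x t : M) (hg₁ : Geodesic E (η x).2 t)
    (hg₂ : Geodesic E (η x).1 (η ((η x).2 * t)).1) :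
    Geodesic E x t ∧
      η (x * t) = ((η x).1 * (η ((η x).2 * t)).1, (η ((η x).2 * t)).2) := by
  induction hn : wordLength E t generalizing t with
  | zero =>
    obtain rfl := eq_one_of_wordLength_eq_zero hgen hn
    by_cases hx : x = 1
    · subst hx
      simp [Geodesic, h.1.2.2.2, wordLength_one]
    · simp [Geodesic, h.1.apply_of_mem h1 hgen (h.1.2.2.1 x hx), wordLength_one]
  | succ n ih =>
    have ht : t ≠ 1 := by
      rintro rfl
      simp [wordLength_one] at hn
    have hs := h.1.2.2.1 t ht
    have hNt := h.1.2.1 t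
    have hprod := h.1.1 t
    generalize (η t).1 = r at hNt hprod
    generalize (η t).2 = s at hs hNt hprod
    subst hprod
    have hNs := wordLength_of_mem h1 hgen hs
    obtain ⟨⟨d, e⟩, hx⟩ : ∃ q, η x = q := ⟨_, rfl⟩
    obtain ⟨⟨g, u⟩, her⟩ : ∃ q, η (e * r) = q := ⟨_, rfl⟩
    obtain ⟨⟨k, l⟩, hus⟩ : ∃ q, η (u * s) = q := ⟨_, rfl⟩
    have hgu := h.1.1 (e * r)
    have hNer := h.1.2.1 (e * r)
    have hkl := h.1.1 (u * s)
    have hNus := h.1.2.1 (u * s)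
    have hweak := h.2 (e * r) s hs
    have hih := ih r
    have hxrs := h.2 (x * r) s hs
    simp only [hx, Geodesic, ← mul_assoc] at hg₁ hg₂ hih ⊢
    simp only [her, hus, Geodesic] at hgu hNer hkl hNus hweak hih hxrs
    have hgkl : g * k * l = e * r * s := by rw [mul_assoc, hkl, ← mul_assoc, hgu]
    have hgus : g * (u * s) = e * r * s := by rw [← mul_assoc, hgu]
    have b₁ := wordLength_mul_le hgen e r
    have b₂ := wordLength_mul_le hgen (e * r) s
    have b₃ := wordLength_mul_le hgen u s
    have b₄ := hgus ▸ wordLength_mul_le hgen g (u * s)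
    have b₅ := hgkl ▸ wordLength_mul_le hgen (g * k) l
    have b₆ := wordLength_mul_le hgen g k
    obtain ⟨-, hw₂, hw₁⟩ := hweak (by omega) (by omega)
    rw [hw₁, ← mul_assoc] at hg₂
    have b₇ := wordLength_mul_le hgen (d * g) k
    have b₈ := wordLength_mul_le hgen d g
    obtain ⟨hxr, hηxr⟩ := hih (by omega) (by omega) (by omega)
    simp only [hηxr, hus] at hxrs
    obtain ⟨hz, hz₂, hz₁⟩ := hxrs (by omega) (by omega)
    refine ⟨by omega, Prod.ext ?_ ?_⟩
    · simp only [hz₁, hw₁]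
      rw [mul_assoc]
    · rw [hz₂, hw₂]

/-- If `f₂f₁f₂` preserves the norm of `p`, then `p` is a geodesic triple. -/
theorem IsWeaklyFactorable.wordLength_mul_eq_tnorm (h : IsWeaklyFactorable E η)
    (h1 : (1 : M) ∉ E) (hgen : IsGenSet E) {p : M × M × M}
    (hp : tnorm E p ≤ tnorm E (f2 η (f1 η (f2 η p)))) :
    wordLength E (p.1 * p.2.1 * p.2.2) = tnorm E p ∧
      f2 η (f1 η (f2 η p)) =
        ((η (η (p.1 * p.2.1 * p.2.2)).1).1, (η (η (p.1 * p.2.1 * p.2.2)).1).2,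
          (η (p.1 * p.2.1 * p.2.2)).2) := by
  obtain ⟨x, y, z⟩ := p
  have b₁ := wordLength_mul_le hgen x y
  have b₂ := wordLength_mul_le hgen (η (x * y)).2 z
  have b₃ := wordLength_mul_le hgen (η (x * y)).1 (η ((η (x * y)).2 * z)).1
  have hxy := h.1.2.1 (x * y)
  have hz := h.1.2.1 ((η (x * y)).2 * z)
  have hac := h.1.2.1 ((η (x * y)).1 * (η ((η (x * y)).2 * z)).1)
  simp only [tnorm, f1, f2] at hp
  obtain ⟨hg, heq⟩ := h.apply_mul h1 hgen (x * y) z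
    (by simp only [Geodesic]; omega) (by simp only [Geodesic]; omega)
  simp only [Geodesic] at hg
  refine ⟨by simp only [tnorm]; omega, ?_⟩
  simp [f1, f2, heq]

theorem IsWeaklyFactorable.isFactorable (h : IsWeaklyFactorable E η)
    (hrec : RecognitionPrinciple E η) (h1 : (1 : M) ∉ E) (hgen : IsGenSet E) :
    IsFactorable E η := by
  refine ⟨h.1, fun p => ?_⟩
  by_cases hp : tnorm E p ≤ tnorm E (f2 η (f1 η (f2 η p)))
  · left
    obtain ⟨hN, hf⟩ := h.wordLength_mul_eq_tnorm h1 hgen hp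
    constructor
    · rw [hf]
      generalize p.1 * p.2.1 * p.2.2 = w
      by_cases hw : w = 1
      · simp [hw, f1, h.1.2.2.2]
      · have hst := (hrec (η w).1 (η w).2 (h.1.2.2.1 w hw)).1 (by rw [h.1.1])
        simp [f1, hst]
    · have hle : tnorm E (f1 η p) ≤ tnorm E (f2 η (f1 η (f2 η (f1 η p)))) := by
        refine (h.1.tnorm_f1_le hgen p).trans ?_
        rw [← hN, ← h.1.mul_f1, ← h.1.mul_f2, ← h.1.mul_f1, ← h.1.mul_f2]
        exact wordLength_le_tnorm hgen _
      rw [hf, (h.wordLength_mul_eq_tnorm h1 hgen hle).2, h.1.mul_f1]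
  · right
    rw [not_le] at hp
    refine ⟨(h.1.tnorm_f1_le hgen _).trans_lt hp, hp, ?_⟩
    by_contra hlt
    rw [not_lt] at hlt
    have hN := (h.wordLength_mul_eq_tnorm h1 hgen
      ((h.1.tnorm_f1_le hgen p).trans hlt)).1
    have hle : tnorm E p ≤ tnorm E (f1 η p) :=
      hlt.trans <| (h.1.tnorm_f2_le hgen _).trans <|
        (h.1.tnorm_f1_le hgen _).trans (h.1.tnorm_f2_le hgen _)
    rw [← hN, h.1.mul_f1, ← h.1.mul_f2, ← h.1.mul_f1, ← h.1.mul_f2] at hle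
    exact absurd hp (not_lt.2 (hle.trans (wordLength_le_tnorm hgen _)))

end Factorability

/-- Let `M` be a monoid, `E ⊆ M∖{1}` a generating set and `η` a factorization map on
`(M, E)`. Then `η` is a factorability structure on `(M, E)` if and only if `η` is a weak
factorability structure satisfying the recognition principle. -/
theorem factorable_iff_weaklyFactorable_and_recognition
    {M : Type*} [Monoid M] (E : Set M) (h1 : (1 : M) ∉ E) (hgen : IsGenSet E)
    (η : M → M × M) (hη : IsFactorizationMap E η) :
    IsFactorable E η ↔ (IsWeaklyFactorable E η ∧ RecognitionPrinciple E η) := by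
  exact ⟨fun h => ⟨h.isWeaklyFactorable h1 hgen, h.recognitionPrinciple h1 hgen⟩,
    fun h => h.1.isFactorable h.2 h1 hgen⟩
end

section
/- For every n ≥ 1 the following holds (statement A(n)): let X ∈ F_{n−2} and let I = 1·sh₁(X)·n ∈ F_n (so the letters 1 and n do not occur in sh₁(X)), and suppose the word I₁ⁿ = 1·2⋯n is a (possibly non-connected) subsequence of I. Then there exist J, K ∈ F_{n−2} such that I ∼ sh₂(J)·I₁ⁿ·sh₁(K), i.e., the two words represent the same element of Q_n'. -/
/-- `w` is a word of the free monoid `F_n` on the letters `{1, …, n}`. -/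
def InF (n : ℕ) (w : List ℕ) : Prop := ∀ a ∈ w, 1 ≤ a ∧ a ≤ n

/-- The congruence on a free monoid of words generated by a relation `r`. -/
inductive CongClosure (r : List ℕ → List ℕ → Prop) : List ℕ → List ℕ → Prop
  | rel (u v : List ℕ) {x y : List ℕ} : r x y → CongClosure r (u ++ x ++ v) (u ++ y ++ v)
  | refl (x : List ℕ) : CongClosure r x x
  | symm {x y : List ℕ} : CongClosure r x y → CongClosure r y x
  | trans {x y z : List ℕ} : CongClosure r x y → CongClosure r y z → CongClosure r x z

/-- The defining relations of `P_n`: `ab = ba` for `|a − b| ≥ 2`, and `aa = a`. -/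
inductive PRel (n : ℕ) : List ℕ → List ℕ → Prop
  | comm (a b : ℕ) : 1 ≤ a → a ≤ n → 1 ≤ b → b ≤ n → (a + 2 ≤ b ∨ b + 2 ≤ a) →
      PRel n [a, b] [b, a]
  | idem (a : ℕ) : 1 ≤ a → a ≤ n → PRel n [a, a] [a]

/-- The congruence `∼_P` on `F_n`. -/
def PCong (n : ℕ) : List ℕ → List ℕ → Prop := CongClosure (PRel n)

/-- The defining relations of `Q_n`: those of `P_n` together with
`k(k+1)k(k+1) = (k+1)k(k+1)` and `(k+1)k(k+1)k = (k+1)k(k+1)`. -/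
inductive QRel (n : ℕ) : List ℕ → List ℕ → Prop
  | ofP {x y : List ℕ} : PRel n x y → QRel n x y
  | braid1 (k : ℕ) : 1 ≤ k → k + 1 ≤ n → QRel n [k, k + 1, k, k + 1] [k + 1, k, k + 1]
  | braid2 (k : ℕ) : 1 ≤ k → k + 1 ≤ n → QRel n [k + 1, k, k + 1, k] [k + 1, k, k + 1]

/-- The congruence `∼_Q` on `F_n`. -/
def QCong (n : ℕ) : List ℕ → List ℕ → Prop := CongClosure (QRel n)

/-- The defining relations of `Q_n'`: those of `Q_n` together with the pairs `(kJ, J)`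
for which there exists `I ∈ F_n` with `kIJ ∼_Q IJ`, `kI ∼_P Ik` and `k` not occurring
in `I`. -/
inductive RRel (n : ℕ) : List ℕ → List ℕ → Prop
  | ofQ {x y : List ℕ} : QRel n x y → RRel n x y
  | absorb (k : ℕ) (I J : List ℕ) : 1 ≤ k → k ≤ n → InF n I → InF n J →
      QCong n ((k :: I) ++ J) (I ++ J) → PCong n (k :: I) (I ++ [k]) → k ∉ I →
      RRel n (k :: J) J

/-- The congruence `∼` on `F_n`; the quotient monoid `F_n/∼` is `Q_n'`. -/
def RCong (n : ℕ) : List ℕ → List ℕ → Prop := CongClosure (RRel n)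

/-- The shift homomorphism `sh_k : F_{n−k} → F_n`, `i ↦ i + k`. -/
def sh (k : ℕ) (w : List ℕ) : List ℕ := w.map (· + k)

/-- The word `I_a^b = a·(a+1)⋯b`. -/
def Iseg (a b : ℕ) : List ℕ := List.range' a (b + 1 - a)

namespace CongClosure

variable {r s : List ℕ → List ℕ → Prop}

theorem of {x y : List ℕ} (h : r x y) : CongClosure r x y := by
  simpa using CongClosure.rel [] [] h

theorem context (u v : List ℕ) {x y : List ℕ} (h : CongClosure r x y) :
    CongClosure r (u ++ x ++ v) (u ++ y ++ v) := by
  induction h with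
  | rel u' v' h => simpa using CongClosure.rel (u ++ u') (v' ++ v) h
  | refl x => exact .refl _
  | symm _ ih => exact ih.symm
  | trans _ _ ih₁ ih₂ => exact ih₁.trans ih₂

theorem append_left (u : List ℕ) {x y : List ℕ} (h : CongClosure r x y) :
    CongClosure r (u ++ x) (u ++ y) := by
  simpa using h.context u []

theorem append_right (v : List ℕ) {x y : List ℕ} (h : CongClosure r x y) :
    CongClosure r (x ++ v) (y ++ v) := by
  simpa using h.context [] v

theorem mono (hrs : ∀ x y, r x y → s x y) {x y : List ℕ} (h : CongClosure r x y) :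
    CongClosure s x y := by
  induction h with
  | rel u v h => exact .rel u v (hrs _ _ h)
  | refl x => exact .refl _
  | symm _ ih => exact ih.symm
  | trans _ _ ih₁ ih₂ => exact ih₁.trans ih₂

end CongClosure

theorem PCong.toQ {n : ℕ} {x y : List ℕ} (h : PCong n x y) : QCong n x y :=
  CongClosure.mono (fun _ _ => QRel.ofP) h

theorem PCong.toR {n : ℕ} {x y : List ℕ} (h : PCong n x y) : RCong n x y :=
  CongClosure.mono (fun _ _ h => RRel.ofQ (.ofP h)) h

/-- A letter commutes with a word all of whose letters are far from it. -/
theorem PCong.letter_comm {n c : ℕ} (hc : 1 ≤ c ∧ c ≤ n) (w : List ℕ)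
    (hw : ∀ x ∈ w, (1 ≤ x ∧ x ≤ n) ∧ (c + 2 ≤ x ∨ x + 2 ≤ c)) :
    PCong n (c :: w) (w ++ [c]) := by
  induction w with
  | nil => exact .refl _
  | cons x w ih =>
    have hx := hw x (by simp)
    have swap : PCong n [c, x] [x, c] :=
      CongClosure.of (.comm c x hc.1 hc.2 hx.1.1 hx.1.2 hx.2)
    have rest := ih fun y hy => hw y (by simp [hy])
    exact (CongClosure.append_right w swap).trans (CongClosure.append_left [x] rest)

theorem Iseg_eq_nil {a b : ℕ} (h : b < a) : Iseg a b = [] := by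
  simp [Iseg, Nat.sub_eq_zero_of_le (show b + 1 ≤ a by omega)]

theorem Iseg_eq_cons {a b : ℕ} (h : a ≤ b) : Iseg a b = a :: Iseg (a + 1) b := by
  simp only [Iseg]
  rw [show b + 1 - a = (b + 1 - (a + 1)) + 1 by omega, List.range'_succ]

theorem Iseg_succ_right {a b : ℕ} (h : a ≤ b + 1) :
    Iseg a (b + 1) = Iseg a b ++ [b + 1] := by
  simp only [Iseg]
  rw [show b + 1 + 1 - a = (b + 1 - a) + 1 by omega, List.range'_concat]
  congr 2
  omega

theorem mem_Iseg {a b x : ℕ} : x ∈ Iseg a b ↔ a ≤ x ∧ x ≤ b := by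
  simp only [Iseg, List.mem_range'_1]
  omega

theorem length_Iseg (a b : ℕ) : (Iseg a b).length = b + 1 - a := by
  simp [Iseg]

/-- The largest `m` such that `(j+1)⋯m` is read off greedily as a subsequence of the word. -/
def climb : ℕ → List ℕ → ℕ
  | j, [] => j
  | j, c :: w => if c = j + 1 then climb (j + 1) w else climb j w

theorem climb_append (u w : List ℕ) (j : ℕ) : climb j (u ++ w) = climb (climb j u) w := by
  induction u generalizing j with
  | nil => rfl
  | cons c u ih =>
    simp only [List.cons_append, climb]
    split <;> exact ih _

theorem le_climb (w : List ℕ) (j : ℕ) : j ≤ climb j w := by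
  induction w generalizing j with
  | nil => exact le_rfl
  | cons c w ih =>
    simp only [climb]
    split
    · exact (Nat.le_succ j).trans (ih _)
    · exact ih _

theorem climb_le {t : ℕ} (w : List ℕ) (j : ℕ) (hj : j ≤ t) (hw : ∀ x ∈ w, x ≤ t) :
    climb j w ≤ t := by
  induction w generalizing j with
  | nil => exact hj
  | cons c w ih =>
    have hc := hw c (by simp)
    have hw' : ∀ x ∈ w, x ≤ t := fun x hx => hw x (by simp [hx])
    simp only [climb]
    split
    · exact ih _ (by omega) hw'
    · exact ih _ hj hw'

theorem climb_of_sublist (w : List ℕ) (j d : ℕ) (h : (List.range' (j + 1) d).Sublist w) :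
    j + d ≤ climb j w := by
  induction w generalizing j d with
  | nil =>
    have : d = 0 := by simpa using h
    simp [climb, this]
  | cons c w ih =>
    cases d with
    | zero => exact le_climb _ _
    | succ d =>
      rw [List.range'_succ] at h
      have tail : (List.range' (j + 1 + 1) d).Sublist w := by
        simpa using h.tail
      simp only [climb]
      split
      · have := ih (j + 1) d tail
        omega
      · rename_i hc
        refine ih j (d + 1) ?_
        rw [List.range'_succ]
        cases h with
        | cons _ h => exact h
        | cons_cons _ h => exact absurd rfl hc

/-- If `Z` absorbs `a+2, …, m` on the right, then `Z·(a+1)⋯j` absorbs every letter of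
`a+1, …, m` other than `j+1`. -/
theorem absorb_right {n m a : ℕ} (hm : m ≤ n) {Z : List ℕ}
    (hZ : ∀ c, a + 2 ≤ c → c ≤ m → QCong n (Z ++ [c]) Z) (j : ℕ) (haj : a ≤ j) (hjm : j ≤ m)
    (c : ℕ) (hac : a + 1 ≤ c) (hcm : c ≤ m) (hcj : c ≠ j + 1) :
    QCong n (Z ++ Iseg (a + 1) j ++ [c]) (Z ++ Iseg (a + 1) j) := by
  induction j using Nat.strong_induction_on generalizing c with
  | _ j ih =>
  rcases Nat.eq_or_lt_of_le haj with rfl | haj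
  · simpa [Iseg_eq_nil] using hZ c (by omega) hcm
  obtain ⟨i, rfl⟩ : ∃ i, j = i + 1 := ⟨j - 1, by omega⟩
  rw [Iseg_succ_right (by omega)]
  by_cases hci : c = i + 1
  · subst hci
    have idem : QCong n [i + 1, i + 1] [i + 1] :=
      CongClosure.of (.ofP (.idem _ (by omega) (by omega)))
    simpa [QCong] using CongClosure.append_left (Z ++ Iseg (a + 1) i) idem
  by_cases hci' : c = i
  · subst hci'
    obtain ⟨k, rfl⟩ : ∃ k, c = k + 1 := ⟨c - 1, by omega⟩
    have absorb := ih k (by omega) (by omega) (by omega) (k + 2) (by omega) (by omega) (by omega)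
    have braid : QCong n [k + 2, k + 1, k + 2, k + 1] [k + 2, k + 1, k + 2] :=
      CongClosure.of (.braid2 (k + 1) (by omega) (by omega))
    rw [Iseg_succ_right (by omega)]
    have h₁ := (CongClosure.append_right [k + 1, k + 2, k + 1] absorb).symm
    have h₂ := CongClosure.append_left (Z ++ Iseg (a + 1) k) braid
    have h₃ := CongClosure.append_right [k + 1, k + 2] absorb
    simp only [List.append_assoc, List.cons_append, List.nil_append] at h₁ h₂ h₃ ⊢
    exact (h₁.trans h₂).trans h₃
  · have swap : QCong n [i + 1, c] [c, i + 1] :=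
      CongClosure.of (.ofP (.comm _ _ (by omega) (by omega) (by omega) (by omega) (by omega)))
    have h₁ := CongClosure.append_left (Z ++ Iseg (a + 1) i) swap
    have h₂ := CongClosure.append_right [i + 1]
      (ih i (by omega) (by omega) (by omega) c hac hcm (by omega))
    simp only [List.append_assoc, List.cons_append, List.nil_append] at h₁ h₂ ⊢
    exact h₁.trans h₂

/-- If `Z` absorbs `a+2, …, m` on the right, a word `w` on `a+1, …, m` following `Z` may be
replaced by the segment it climbs. -/
theorem absorb_word {n m a : ℕ} (hm : m ≤ n) (ham : a ≤ m) {Z : List ℕ}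
    (hZ : ∀ c, a + 2 ≤ c → c ≤ m → QCong n (Z ++ [c]) Z) (w : List ℕ)
    (hw : ∀ x ∈ w, a + 1 ≤ x ∧ x ≤ m) :
    QCong n (Z ++ w) (Z ++ Iseg (a + 1) (climb a w)) := by
  induction w using List.reverseRecOn with
  | nil => simpa [QCong, climb, Iseg_eq_nil] using CongClosure.refl Z
  | append_singleton w c ih =>
    have hw' : ∀ x ∈ w, a + 1 ≤ x ∧ x ≤ m := fun x hx => hw x (by simp [hx])
    have hc := hw c (by simp)
    have h₁ := CongClosure.append_right [c] (ih hw')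
    have hle := le_climb w a
    have hlem := climb_le w a ham fun x hx => (hw' x hx).2
    rw [climb_append]
    rw [List.append_assoc] at h₁
    refine h₁.trans ?_
    simp only [climb]
    split
    · rename_i h
      rw [Iseg_succ_right (by omega), ← h, List.append_assoc]
      exact .refl _
    · exact absorb_right hm hZ _ hle hlem c hc.1 hc.2 ‹_›

/-- There is a word on `a+1, …, m` absorbing each of these letters on the right. -/
theorem exists_right_absorber {n m : ℕ} (hm : m ≤ n) (a : ℕ) :
    ∃ Z : List ℕ, (∀ x ∈ Z, a + 1 ≤ x ∧ x ≤ m) ∧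
      ∀ c, a + 1 ≤ c → c ≤ m → QCong n (Z ++ [c]) Z := by
  induction h : m - a generalizing a with
  | zero => exact ⟨[], by simp, fun c _ _ => by omega⟩
  | succ d ih =>
    obtain ⟨Z, hmem, hZ⟩ := ih (a + 1) (by omega)
    refine ⟨Z ++ Iseg (a + 1) m, ?_, ?_⟩
    · intro x hx
      rcases List.mem_append.1 hx with hx | hx
      · have := hmem x hx
        omega
      · exact mem_Iseg.1 hx
    · intro c hac hcm
      exact absorb_right hm hZ m (by omega) le_rfl c hac hcm (by omega)

/-- The word `(a+1)⋯m·a⋯m` absorbs `a` on the left. -/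
theorem absorb_left {n m : ℕ} (hm : m ≤ n) (a : ℕ) (ha : 1 ≤ a) (ham : a ≤ m) :
    QCong n (a :: (Iseg (a + 1) m ++ Iseg a m)) (Iseg (a + 1) m ++ Iseg a m) := by
  induction h : m - a generalizing a with
  | zero =>
    obtain rfl : a = m := by omega
    rw [Iseg_eq_cons le_rfl, Iseg_eq_nil (Nat.lt_succ_self a)]
    exact CongClosure.of (.ofP (.idem a ha hm))
  | succ d ih =>
    have inner := ih (a + 1) (by omega) (by omega) (by omega)
    have split : QCong n (Iseg (a + 1) m ++ Iseg a m)
        ([a + 1, a, a + 1] ++ (Iseg (a + 1 + 1) m ++ Iseg (a + 1) m)) := by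
      have move : QCong n (Iseg (a + 1 + 1) m ++ [a]) (a :: Iseg (a + 1 + 1) m) :=
        (PCong.letter_comm ⟨ha, by omega⟩ _ fun x hx => by
          have := mem_Iseg.1 hx
          omega).toQ.symm
      have h₁ := CongClosure.context [a + 1] (Iseg (a + 1) m) move
      have h₂ := CongClosure.append_left [a + 1, a] inner.symm
      rw [Iseg_eq_cons ham]
      nth_rw 1 [Iseg_eq_cons (show a + 1 ≤ m by omega)]
      simp only [List.append_assoc, List.cons_append, List.nil_append] at h₁ h₂ ⊢
      exact h₁.trans h₂
    have braid : QCong n [a, a + 1, a, a + 1] [a + 1, a, a + 1] :=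
      CongClosure.of (.braid1 a ha (by omega))
    have h₁ := CongClosure.append_left [a] split
    have h₂ := CongClosure.append_right (Iseg (a + 1 + 1) m ++ Iseg (a + 1) m) braid
    exact (h₁.trans h₂).trans split.symm

/-- In `Q_n'`, the letter `a+1` is absorbed by `(a+2)⋯m·w` as soon as `w` has
`(a+1)⋯m` as a subsequence. -/
theorem absorb_of_climb {n m a : ℕ} (hm : m ≤ n) (ham : a + 1 ≤ m) (w : List ℕ)
    (hw : ∀ x ∈ w, a + 1 ≤ x ∧ x ≤ m) (hclimb : climb a w = m) :
    RCong n ((a + 1) :: (Iseg (a + 2) m ++ w)) (Iseg (a + 2) m ++ w) := by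
  obtain ⟨Z, hmem, hZ⟩ := exists_right_absorber hm (a + 2)
  have hcomm : PCong n ((a + 1) :: Z) (Z ++ [a + 1]) :=
    PCong.letter_comm ⟨by omega, by omega⟩ Z fun x hx => by
      have := hmem x hx
      omega
  have reduce : QCong n (Z ++ (Iseg (a + 2) m ++ w))
      (Z ++ (Iseg (a + 2) m ++ Iseg (a + 1) m)) := by
    have := absorb_word (Z := Z ++ Iseg (a + 2) m) hm (by omega)
      (fun c hac hcm => absorb_right (a := a + 1) hm hZ m ham le_rfl c hac hcm (by omega)) w hw
    simpa [hclimb] using this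
  refine CongClosure.of (.absorb (a + 1) Z _ (by omega) (by omega) ?_ ?_ ?_ hcomm ?_)
  · intro x hx
    have := hmem x hx
    omega
  · intro x hx
    rcases List.mem_append.1 hx with hx | hx
    · have := mem_Iseg.1 hx
      omega
    · have := hw x hx
      omega
  · have h₁ := CongClosure.append_left [a + 1] reduce
    have h₂ := CongClosure.append_right (Iseg (a + 2) m ++ Iseg (a + 1) m) hcomm.toQ
    have h₃ := CongClosure.append_left Z (absorb_left hm (a + 1) (by omega) ham)
    simp only [List.append_assoc, List.cons_append, List.nil_append] at h₁ h₂ h₃ ⊢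
    exact ((h₁.trans h₂).trans h₃).trans reduce.symm
  · intro hx
    have := hmem _ hx
    omega

/-- A word climbing from `a` only to `j` splits, up to commutations, into a word on letters
beyond `j+1` followed by a word on letters up to `j`. -/
theorem split_of_climb {n a t : ℕ} (htn : t ≤ n) (w : List ℕ)
    (hw : ∀ x ∈ w, a + 1 ≤ x ∧ x ≤ t) :
    ∃ u v : List ℕ, (∀ x ∈ u, a + 2 ≤ x ∧ x ≤ t) ∧
      (∀ x ∈ v, a + 1 ≤ x ∧ x ≤ climb a w) ∧ u.length + v.length = w.length ∧
      PCong n w (u ++ v) := by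
  induction w using List.reverseRecOn with
  | nil => exact ⟨[], [], by simp, by simp, rfl, .refl _⟩
  | append_singleton w c ih =>
    have hw' : ∀ x ∈ w, a + 1 ≤ x ∧ x ≤ t := fun x hx => hw x (by simp [hx])
    have hc := hw c (by simp)
    obtain ⟨u, v, hu, hv, hlen, hcong⟩ := ih hw'
    have hle := le_climb w a
    have h₁ := CongClosure.append_right [c] hcong
    by_cases hfar : climb a w + 2 ≤ c
    · have move : PCong n (v ++ [c]) (c :: v) :=
        (PCong.letter_comm ⟨by omega, by omega⟩ v fun x hx => by
          have := hv x hx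
          omega).symm
      refine ⟨u ++ [c], v, ?_, ?_, ?_, ?_⟩
      · intro x hx
        rcases List.mem_append.1 hx with hx | hx
        · exact hu x hx
        · obtain rfl : x = c := by simpa using hx
          omega
      · intro x hx
        have := hv x hx
        have := le_climb [c] (climb a w)
        rw [climb_append]
        omega
      · simp only [List.length_append, List.length_singleton]
        omega
      · have h₂ := CongClosure.append_left u move
        simp only [List.append_assoc, List.cons_append, List.nil_append] at h₁ h₂ ⊢
        exact h₁.trans h₂
    · refine ⟨u, v ++ [c], hu, ?_, ?_, by simpa [PCong] using h₁⟩
      · intro x hx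
        have hstep : climb a w ≤ climb a (w ++ [c]) ∧ c ≤ climb a (w ++ [c]) := by
          rw [climb_append]
          simp only [climb]
          split <;> omega
        rcases List.mem_append.1 hx with hx | hx
        · have := hv x hx
          omega
        · obtain rfl : x = c := by simpa using hx
          omega
      · simp only [List.length_append, List.length_singleton]
        omega

theorem climb_Iseg {a m : ℕ} (ham : a ≤ m) : m ≤ climb a (Iseg (a + 1) m) := by
  have := climb_of_sublist (Iseg (a + 1) m) a (m - a)
    (by simp [Iseg, show m + 1 - (a + 1) = m - a by omega])
  omega

/-- The word `a·w`, where `w` is on the letters `a+1, …, t`, equals `J·a⋯m·K` in `Q_n'`, where `m` is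
the index climbed by `w`, and the right-hand word is not longer. -/
def HasForm (n t a : ℕ) (w : List ℕ) : Prop :=
  ∃ J K : List ℕ, (∀ x ∈ J, a + 2 ≤ x ∧ x ≤ t) ∧
    (∀ x ∈ K, a + 1 ≤ x ∧ x + 1 ≤ climb a w) ∧
    J.length + (Iseg a (climb a w)).length + K.length ≤ w.length + 1 ∧
    RCong n (a :: w) (J ++ Iseg a (climb a w) ++ K)

/-- Absorption of a repeated letter `m` into `a⋯m·K`. -/
theorem exists_form_repeat {n a m : ℕ} (ha : 1 ≤ a) (ham : a + 1 ≤ m) (hmn : m ≤ n)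
    (K : List ℕ) (hK : ∀ x ∈ K, a + 1 ≤ x ∧ x + 1 ≤ m)
    (ih : ∀ b w, 1 ≤ b → b ≤ m → (∀ x ∈ w, b + 1 ≤ x ∧ x ≤ m) →
      w.length < (Iseg a m).length + K.length → HasForm n m b w) :
    ∃ J' K' : List ℕ, (∀ x ∈ J', a + 2 ≤ x ∧ x ≤ m) ∧ (∀ x ∈ K', a + 1 ≤ x ∧ x + 1 ≤ m) ∧
      J'.length + (Iseg a m).length + K'.length ≤ (Iseg a m).length + K.length + 1 ∧
      RCong n (Iseg a m ++ K ++ [m]) (J' ++ Iseg a m ++ K') := by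
  have hKm : ∀ x ∈ K ++ [m], a + 1 ≤ x ∧ x ≤ m := by
    intro x hx
    rcases List.mem_append.1 hx with hx | hx
    · have := hK x hx
      omega
    · obtain rfl : x = m := by simpa using hx
      omega
  have hseg : Iseg a m = a :: (a + 1) :: Iseg (a + 2) m := by
    rw [Iseg_eq_cons (by omega), Iseg_eq_cons ham]
  have hle : climb a (K ++ [m]) ≤ m := climb_le _ _ (by omega) fun x hx => (hKm x hx).2
  rcases Nat.eq_or_lt_of_le hle with hfull | hpart
  · obtain ⟨J, K', hJ, hK', hlen, hcong⟩ := ih a (K ++ [m]) ha (by omega) hKm (by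
      simp only [length_Iseg, List.length_append, List.length_singleton]
      omega)
    rw [hfull] at hK' hlen hcong
    refine ⟨Iseg (a + 2) m ++ J, K', ?_, hK', ?_, ?_⟩
    · intro x hx
      rcases List.mem_append.1 hx with hx | hx
      · exact mem_Iseg.1 hx
      · exact hJ x hx
    · simp only [length_Iseg, List.length_append, List.length_singleton] at hlen ⊢
      omega
    · have absorb := CongClosure.append_left [a] (absorb_of_climb hmn ham (K ++ [m]) hKm hfull)
      have move : RCong n (a :: Iseg (a + 2) m) (Iseg (a + 2) m ++ [a]) :=
        (PCong.letter_comm ⟨ha, by omega⟩ _ fun x hx => by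
          have := mem_Iseg.1 hx
          omega).toR
      have h₂ := CongClosure.append_right (K ++ [m]) move
      have h₃ := CongClosure.append_left (Iseg (a + 2) m) hcong
      nth_rw 1 [hseg]
      simp only [List.append_assoc, List.cons_append, List.nil_append] at absorb h₂ h₃ ⊢
      exact (absorb.trans h₂).trans h₃
  · obtain ⟨u, v, hu, hv, huv, hsplit⟩ := split_of_climb hmn (K ++ [m]) hKm
    have hmem : ∀ x ∈ Iseg (a + 2) m ++ u, a + 1 + 1 ≤ x ∧ x ≤ m := by
      intro x hx
      rcases List.mem_append.1 hx with hx | hx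
      · exact mem_Iseg.1 hx
      · exact hu x hx
    simp only [List.length_append, List.length_singleton] at huv
    obtain ⟨J, K', hJ, hK', hlen, hcong⟩ := ih (a + 1) (Iseg (a + 2) m ++ u) (by omega) ham hmem
      (by
        simp only [length_Iseg, List.length_append]
        omega)
    have hfull : climb (a + 1) (Iseg (a + 2) m ++ u) = m := by
      refine le_antisymm (climb_le _ _ ham fun x hx => (hmem x hx).2) ?_
      rw [climb_append]
      exact (climb_Iseg ham).trans (le_climb _ _)
    rw [hfull] at hK' hlen hcong
    refine ⟨J, K' ++ v, ?_, ?_, ?_, ?_⟩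
    · intro x hx
      have := hJ x hx
      omega
    · intro x hx
      rcases List.mem_append.1 hx with hx | hx
      · have := hK' x hx
        omega
      · have := hv x hx
        omega
    · simp only [length_Iseg, List.length_append] at hlen ⊢
      omega
    · have move : RCong n (a :: J) (J ++ [a]) :=
        (PCong.letter_comm ⟨ha, by omega⟩ _ fun x hx => by
          have := hJ x hx
          omega).toR
      have h₁ := CongClosure.append_left (Iseg a m) hsplit.toR
      have h₂ := CongClosure.context [a] v hcong
      have h₃ := CongClosure.append_right (Iseg (a + 1) m ++ K' ++ v) move
      rw [hseg] at h₁ ⊢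
      rw [Iseg_eq_cons ham] at h₂ h₃
      simp only [List.append_assoc, List.cons_append, List.nil_append] at h₁ h₂ h₃ ⊢
      exact (h₁.trans h₂).trans h₃

theorem hasForm_of_length {n : ℕ} (N : ℕ) :
    ∀ (t a : ℕ) (w : List ℕ), w.length ≤ N → 1 ≤ a → a ≤ t → t ≤ n →
      (∀ x ∈ w, a + 1 ≤ x ∧ x ≤ t) → HasForm n t a w := by
  induction N with
  | zero =>
    intro t a w hN ha hat htn hw
    obtain rfl : w = [] := by simpa using hN
    refine ⟨[], [], by simp, by simp, by simp [climb, length_Iseg], ?_⟩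
    rw [climb, Iseg_eq_cons le_rfl, Iseg_eq_nil (Nat.lt_succ_self a)]
    exact .refl _
  | succ N ih =>
    intro t a w hN ha hat htn hw
    rcases List.eq_nil_or_concat w with rfl | ⟨w, c, rfl⟩
    · exact ih t a [] (by simp) ha hat htn hw
    rw [List.concat_eq_append] at *
    have hc := hw c (by simp)
    have hw' : ∀ x ∈ w, a + 1 ≤ x ∧ x ≤ t := fun x hx => hw x (by simp [hx])
    have hN' : w.length ≤ N := by simpa using hN
    obtain ⟨J, K, hJ, hK, hlen, hcong⟩ := ih t a w hN' ha hat htn hw'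
    have ham := le_climb w a
    have hmt := climb_le w a hat fun x hx => (hw' x hx).2
    unfold HasForm
    simp only [climb_append, climb]
    generalize climb a w = m at *
    have h₁ := CongClosure.append_right [c] hcong
    by_cases hnext : c = m + 1
    · subst hnext
      rw [if_pos rfl]
      refine ⟨J, K, hJ, fun x hx => ?_, ?_, ?_⟩
      · have := hK x hx
        omega
      · simp only [length_Iseg, List.length_append, List.length_singleton] at hlen ⊢
        omega
      · have move : RCong n (K ++ [m + 1]) ((m + 1) :: K) :=
          (PCong.letter_comm ⟨by omega, by omega⟩ K fun x hx => by
            have := hK x hx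
            omega).toR.symm
        have h₂ := CongClosure.append_left (J ++ Iseg a m) move
        rw [Iseg_succ_right (by omega)]
        simp only [List.append_assoc, List.cons_append, List.nil_append] at h₁ h₂ ⊢
        exact h₁.trans h₂
    rw [if_neg hnext]
    rcases lt_trichotomy c m with hlt | rfl | hgt
    · refine ⟨J, K ++ [c], hJ, fun x hx => ?_, ?_, by simpa [RCong] using h₁⟩
      · rcases List.mem_append.1 hx with hx | hx
        · exact hK x hx
        · obtain rfl : x = c := by simpa using hx
          omega
      · simp only [List.length_append, List.length_singleton] at hlen ⊢
        omega
    · obtain ⟨J', K', hJ', hK', hlen', hcong'⟩ := exists_form_repeat ha hc.1 (by omega) K hK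
        fun b v hb hbm hv hv' => ih c b v (by omega) hb hbm (by omega) hv
      refine ⟨J ++ J', K', fun x hx => ?_, hK', ?_, ?_⟩
      · rcases List.mem_append.1 hx with hx | hx
        · exact hJ x hx
        · have := hJ' x hx
          omega
      · simp only [List.length_append, List.length_singleton] at hlen hlen' ⊢
        omega
      · have h₂ := CongClosure.append_left J hcong'
        simp only [List.append_assoc, List.cons_append] at h₁ h₂ ⊢
        exact h₁.trans h₂
    · have move : RCong n (Iseg a m ++ K ++ [c]) (c :: (Iseg a m ++ K)) :=
        (PCong.letter_comm ⟨by omega, by omega⟩ _ fun x hx => by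
          rcases List.mem_append.1 hx with hx | hx
          · have := mem_Iseg.1 hx
            omega
          · have := hK x hx
            omega).toR.symm
      refine ⟨J ++ [c], K, fun x hx => ?_, hK, ?_, ?_⟩
      · rcases List.mem_append.1 hx with hx | hx
        · exact hJ x hx
        · obtain rfl : x = c := by simpa using hx
          omega
      · simp only [List.length_append, List.length_singleton] at hlen ⊢
        omega
      · have h₂ := CongClosure.append_left J move
        simp only [List.append_assoc, List.cons_append, List.nil_append] at h₁ h₂ ⊢
        exact h₁.trans h₂

/-- A word on letters beyond `k` is a shifted word. -/
theorem exists_sh {n k : ℕ} (w : List ℕ) (hw : ∀ x ∈ w, k + 1 ≤ x ∧ x ≤ n + k) :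
    ∃ u : List ℕ, InF n u ∧ sh k u = w := by
  refine ⟨w.map (· - k), ?_, ?_⟩
  · intro x hx
    obtain ⟨y, hy, rfl⟩ := List.mem_map.1 hx
    have := hw y hy
    omega
  · rw [sh, List.map_map]
    refine (List.map_congr_left fun x hx => ?_).trans (List.map_id w)
    have := hw x hx
    simp only [Function.comp_apply, id]
    omega

/-- Statement A(n): if `X ∈ F_{n−2}` and `I = 1·sh₁(X)·n ∈ F_n` contains
`I₁ⁿ = 1·2⋯n` as a (possibly non-connected) subsequence, then there are
`J, K ∈ F_{n−2}` with `I ∼ sh₂(J)·I₁ⁿ·sh₁(K)` in `Q_n'`. -/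
theorem statement_A (n : ℕ) (hn : 1 ≤ n) (X : List ℕ) (hX : InF (n - 2) X)
    (hsub : List.Sublist (Iseg 1 n) ([1] ++ sh 1 X ++ [n])) :
    ∃ J K : List ℕ, InF (n - 2) J ∧ InF (n - 2) K ∧
      RCong n ([1] ++ sh 1 X ++ [n]) (sh 2 J ++ Iseg 1 n ++ sh 1 K) := by
  rcases Nat.eq_or_lt_of_le hn with rfl | hn
  · obtain rfl : X = [] := List.eq_nil_iff_forall_not_mem.2 fun x hx => by
      have := hX x hx
      omega
    exact ⟨[], [], by simp [InF], by simp [InF],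
      CongClosure.of (.ofQ (.ofP (.idem 1 le_rfl le_rfl)))⟩
  have hw : ∀ x ∈ sh 1 X ++ [n], 1 + 1 ≤ x ∧ x ≤ n := by
    intro x hx
    rcases List.mem_append.1 hx with hx | hx
    · obtain ⟨y, hy, rfl⟩ := List.mem_map.1 hx
      have := hX y hy
      omega
    · obtain rfl : x = n := by simpa using hx
      omega
  have hclimb : climb 1 (sh 1 X ++ [n]) = n := by
    refine le_antisymm (climb_le _ _ hn.le fun x hx => (hw x hx).2) ?_
    rw [Iseg_eq_cons hn.le] at hsub
    have := climb_of_sublist (sh 1 X ++ [n]) 1 (n - 1) (by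
      simpa [Iseg, show n + 1 - (1 + 1) = n - 1 by omega] using hsub)
    omega
  obtain ⟨J, K, hJ, hK, -, hcong⟩ := hasForm_of_length _ n 1 _ le_rfl le_rfl hn.le le_rfl hw
  rw [hclimb] at hK hcong
  obtain ⟨J, hJ', rfl⟩ := exists_sh (n := n - 2) (k := 2) J fun x hx => by
    have := hJ x hx
    omega
  obtain ⟨K, hK', rfl⟩ := exists_sh (n := n - 2) (k := 1) K fun x hx => by
    have := hK x hx
    omega
  exact ⟨J, K, hJ', hK', hcong⟩
end
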